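/- Suppose m = t(d+1) + α with t ≥ 1 and 1 ≤ α ≤ d. Then the matching μ on the face poset of Ind(G_m^d) has exactly one critical cell, namely {b_1, b_{j_1}, b_{i_2}, b_{j_2}, …, b_{i_t}, b_{j_t}, b_{1+t(d+1)}} with j_1 = d − α + 2, i_r = 1 + (r−1)(d+1), and j_r = j_1 + (r−1)(d+1); this cell has cardinality 2t + 1. -/

import Mathlib

open Finset

/-- The graph `G_m^d` on vertex set `Fin m ⊕ Fin m` (0-based indexing):
`Sum.inl i` is the vertex `a_{i+1}` and `Sum.inr j` is the vertex `b_{j+1}` of the paper;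
`a_i` is adjacent to `b_j` iff `(j - i) mod m ∈ {0, …, d-1}`. -/
def Gmd (m d : ℕ) : SimpleGraph (Fin m ⊕ Fin m) :=
  SimpleGraph.fromRel (fun u v =>
    ∃ i j : Fin m, u = Sum.inl i ∧ v = Sum.inr j ∧ (j.val + m - i.val) % m < d)

/-- A finite set of vertices is independent iff no two of its elements are adjacent. -/
def IsInd (m d : ℕ) (σ : Finset (Fin m ⊕ Fin m)) : Prop :=
  ∀ u ∈ σ, ∀ v ∈ σ, ¬ (Gmd m d).Adj u v

/-- The face poset `P` of the independence complex `Ind (G_m^d)` (ordered by `⊆`),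
including the empty simplex. -/
def faceP (m d : ℕ) : Set (Finset (Fin m ⊕ Fin m)) := {σ | IsInd m d σ}

/-- One step of the matching construction: `S_x(T) = {σ ∈ T | x ∉ σ, σ ∪ {x} ∈ T}`. -/
def stepS {α : Type*} [DecidableEq α] (x : α) (T : Set (Finset α)) : Set (Finset α) :=
  {σ | σ ∈ T ∧ x ∉ σ ∧ insert x σ ∈ T}

/-- The survivors of one step: `T \ (S_x(T) ∪ μ_x(S_x(T)))`. -/
def stepSurv {α : Type*} [DecidableEq α] (x : α) (T : Set (Finset α)) : Set (Finset α) :=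
  T \ (stepS x T ∪ (insert x) '' (stepS x T))

/-- Iterating the matching construction along a list of vertices. -/
def phase {α : Type*} [DecidableEq α] (T : Set (Finset α)) (l : List α) : Set (Finset α) :=
  l.foldl (fun T x => stepSurv x T) T

/-- The list `a_1, …, a_m`. -/
def listA (m : ℕ) : List (Fin m ⊕ Fin m) := (List.finRange m).map Sum.inl
/-- The list `b_1, …, b_m`. -/
def listB (m : ℕ) : List (Fin m ⊕ Fin m) := (List.finRange m).map Sum.inr

/-- `S_{a_{i+1}}` (0-based `i`): the set matched with `a_{i+1}` at stage `i+1` of phase one. -/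
def Sa (m d : ℕ) (i : Fin m) : Set (Finset (Fin m ⊕ Fin m)) :=
  stepS (Sum.inl i) (phase (faceP m d) ((listA m).take i.val))

/-- `M = P \ (S_1 ∪ μ_1(S_1))`, the simplices surviving phase one. -/
def setM (m d : ℕ) : Set (Finset (Fin m ⊕ Fin m)) := phase (faceP m d) (listA m)

/-- `S_{b_{i+1}}` (0-based `i`): the set matched with `b_{i+1}` at stage `i+1` of phase two. -/
def Sb (m d : ℕ) (i : Fin m) : Set (Finset (Fin m ⊕ Fin m)) :=
  stepS (Sum.inr i) (phase (setM m d) ((listB m).take i.val))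

/-- `𝒮_{a_{i+1}} = S_{a_{i+1}} ∪ μ_{a_{i+1}}(S_{a_{i+1}})`. -/
def scriptSa (m d : ℕ) (i : Fin m) : Set (Finset (Fin m ⊕ Fin m)) :=
  Sa m d i ∪ (insert (Sum.inl i)) '' (Sa m d i)

/-- `𝒮_{b_{i+1}} = S_{b_{i+1}} ∪ μ_{b_{i+1}}(S_{b_{i+1}})`. -/
def scriptSb (m d : ℕ) (i : Fin m) : Set (Finset (Fin m ⊕ Fin m)) :=
  Sb m d i ∪ (insert (Sum.inr i)) '' (Sb m d i)

/-- The critical cells `C = P \ (S ∪ μ(S))`. -/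
def setC (m d : ℕ) : Set (Finset (Fin m ⊕ Fin m)) :=
  faceP m d \ ((⋃ i : Fin m, scriptSa m d i) ∪ (⋃ i : Fin m, scriptSb m d i))

/-- The matching relation: `MatchRel σ τ` iff `τ = μ(σ)` for `σ ∈ S = S_1 ∪ S_2`. -/
def MatchRel (m d : ℕ) (σ τ : Finset (Fin m ⊕ Fin m)) : Prop :=
  (∃ i : Fin m, σ ∈ Sa m d i ∧ τ = insert (Sum.inl i) σ) ∨
  (∃ i : Fin m, σ ∈ Sb m d i ∧ τ = insert (Sum.inr i) σ)

/-- `B_{s+1} = {b_{s+1}, b_{s+2}, …, b_{s+m-d}}` (0-based `s`, subscripts mod `m`). -/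
def Bset (m d : ℕ) (s : Fin m) : Finset (Fin m ⊕ Fin m) :=
  (Finset.univ.filter (fun j : Fin m => (j.val + m - s.val) % m < m - d)).image Sum.inr

/-- `b_{n+1} ∈ σ` (0-based subscript `n`). -/
def hasB (m : ℕ) (σ : Finset (Fin m ⊕ Fin m)) (n : ℕ) : Prop :=
  ∃ j : Fin m, j.val = n ∧ Sum.inr j ∈ σ

/-- `σ ⊆ B`. -/
def onlyB (m : ℕ) (σ : Finset (Fin m ⊕ Fin m)) : Prop :=
  ∀ v ∈ σ, ∃ j : Fin m, v = Sum.inr j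

/-- Property `P_l` of the paper, with parameter `j1` (0-based: the paper's `j_1 - 1`, so
`1 ≤ j1 ≤ d`).  With 0-based subscripts `i_r = (r-1)(d+1)`, `j_r = j1 + (r-1)(d+1)` and
`k = m + j1 - (d+1)`:  σ ∈ M, σ ⊆ B, the `2l` smallest subscripts of σ are exactly
`0 = i_1, j_1, i_2, j_2, …, i_l, j_l`, the largest subscript is `k`, and
`σ \ {b_{i_r}} ∉ M`, `σ \ {b_{j_r}} ∉ M` for all `1 ≤ r ≤ l`. -/
def propP (m d l j1 : ℕ) (σ : Finset (Fin m ⊕ Fin m)) : Prop :=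
  σ ∈ setM m d ∧ onlyB m σ ∧ 1 ≤ j1 ∧ j1 ≤ d ∧
  (∀ r, 1 ≤ r → r ≤ l → hasB m σ ((r-1)*(d+1)) ∧ hasB m σ (j1 + (r-1)*(d+1))) ∧
  (∀ j : Fin m, Sum.inr j ∈ σ → j.val ≤ j1 + (l-1)*(d+1) →
      ∃ r, 1 ≤ r ∧ r ≤ l ∧ (j.val = (r-1)*(d+1) ∨ j.val = j1 + (r-1)*(d+1))) ∧
  hasB m σ (m + j1 - (d+1)) ∧
  (∀ j : Fin m, Sum.inr j ∈ σ → j.val ≤ m + j1 - (d+1)) ∧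
  (∀ r, 1 ≤ r → r ≤ l → ∀ j : Fin m,
      (j.val = (r-1)*(d+1) ∨ j.val = j1 + (r-1)*(d+1)) → σ.erase (Sum.inr j) ∉ setM m d)

/-!
After phase one only subsets of `B` survive: those meeting every cyclic window of `d` consecutive
indices. Let `X` be such a set, with largest index `q`, and put `c = q + d + 1 - m`. Extend `q - m`
and `0` periodically with period `d + 1`: the nonnegative terms form the ladder
`0 < c < d + 1 < c + d + 1 < ⋯`. Strictly between rungs `r` and `r + 2` there are exactly `d`
integers, and the only rung among them is `r + 1`; so if `q` is at least rung `r + 1`, then `X`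
contains that rung unless it leaves the ladder below rung `r + 2`. Phase two toggles the last rung
below the first element of `X` off the ladder; this changes neither that element nor `q`. Hence `X`
is critical exactly when it lies on its ladder. Then `q` is itself a rung, which for
`m = t (d + 1) + a` forces `q = t (d + 1)`.
-/

open scoped symmDiff

section Toggle

variable {α β : Type*} [DecidableEq α] [DecidableEq β]

theorem mem_symmDiff_singleton_self {s : Finset α} {x : α} : x ∈ s ∆ {x} ↔ x ∉ s := by
  simp [Finset.mem_symmDiff]

theorem mem_symmDiff_singleton_of_ne {s : Finset α} {x y : α} (h : y ≠ x) :
    y ∈ s ∆ {x} ↔ y ∈ s := by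
  simp [Finset.mem_symmDiff, h]

theorem symmDiff_singleton_of_mem {s : Finset α} {x : α} (h : x ∈ s) : s ∆ {x} = s.erase x := by
  ext y
  by_cases hy : y = x <;> simp [Finset.mem_symmDiff, hy, h]

theorem symmDiff_singleton_of_notMem {s : Finset α} {x : α} (h : x ∉ s) :
    s ∆ {x} = insert x s := by
  ext y
  by_cases hy : y = x <;> simp [Finset.mem_symmDiff, hy, h]

theorem symmDiff_singleton_ne (s : Finset α) (x : α) : s ∆ {x} ≠ s := by
  simp [symmDiff_eq_left]

theorem map_symmDiff_singleton (e : α ↪ β) (s : Finset α) (x : α) :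
    (s ∆ {x}).map e = s.map e ∆ {e x} := by
  simp only [Finset.map_eq_image, Finset.image_symmDiff _ _ e.injective, Finset.image_singleton]

end Toggle

section Phase

variable {α β : Type*} [DecidableEq α] [DecidableEq β]

theorem mem_stepSurv_iff {T : Set (Finset α)} {x : α} {σ : Finset α} :
    σ ∈ stepSurv x T ↔ σ ∈ T ∧ σ ∆ {x} ∉ T := by
  have mem_image : σ ∈ insert x '' stepS x T ↔ σ ∈ T ∧ x ∈ σ ∧ σ.erase x ∈ T := by
    constructor
    · rintro ⟨τ, ⟨hτ, hx, hins⟩, rfl⟩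
      exact ⟨hins, mem_insert_self x τ, by rwa [erase_insert hx]⟩
    · rintro ⟨hσ, hx, herase⟩
      exact ⟨σ.erase x, ⟨herase, notMem_erase x σ, by rwa [insert_erase hx]⟩, insert_erase hx⟩
  rw [stepSurv, Set.mem_sdiff, Set.mem_union, mem_image, stepS, Set.mem_ofPred_eq]
  by_cases hx : x ∈ σ
  · rw [symmDiff_singleton_of_mem hx]
    tauto
  · rw [symmDiff_singleton_of_notMem hx]
    tauto

theorem phase_append_singleton (T : Set (Finset α)) (l : List α) (x : α) :
    phase T (l ++ [x]) = stepSurv x (phase T l) := by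
  simp [phase]

theorem mem_phase_iff_forall_notMem_step {T : Set (Finset α)} {l : List α} {σ : Finset α} :
    σ ∈ phase T l ↔ σ ∈ T ∧ ∀ k : Fin l.length,
      σ ∉ stepS l[k] (phase T (l.take k)) ∪ insert l[k] '' stepS l[k] (phase T (l.take k)) := by
  induction l generalizing T with
  | nil => simp [phase]
  | cons x l ih =>
    change σ ∈ phase (stepSurv x T) l ↔ _
    rw [ih, stepSurv, Set.mem_sdiff, and_assoc]
    exact and_congr_right fun _ =>
      ⟨fun ⟨h0, h⟩ k => Fin.cases h0 h k, fun h => ⟨h 0, fun k => h k.succ⟩⟩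

theorem phase_map_finRange {m : ℕ} (T : Set (Finset α)) (f : Fin m → α) :
    phase T ((List.finRange m).map f) = T \ ⋃ i : Fin m,
      (stepS (f i) (phase T (((List.finRange m).map f).take i)) ∪
        insert (f i) '' stepS (f i) (phase T (((List.finRange m).map f).take i))) := by
  ext σ
  rw [mem_phase_iff_forall_notMem_step, Set.mem_sdiff, Set.mem_iUnion, not_exists]
  exact and_congr_right fun _ => (finCongr (by simp)).forall_congr fun k => by
    simp [Fin.cast]

theorem stepSurv_image_map (e : α ↪ β) (T : Set (Finset α)) (x : α) :
    stepSurv (e x) (Finset.map e '' T) = Finset.map e '' stepSurv x T := by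
  have mem_image (σ : Finset α) : σ.map e ∈ Finset.map e '' T ↔ σ ∈ T :=
    (Finset.map_injective e).mem_set_image
  ext τ
  constructor
  · intro h
    obtain ⟨⟨σ, hσ, rfl⟩, hτ⟩ := mem_stepSurv_iff.1 h
    rw [← map_symmDiff_singleton, mem_image] at hτ
    exact ⟨σ, mem_stepSurv_iff.2 ⟨hσ, hτ⟩, rfl⟩
  · rintro ⟨σ, hσ, rfl⟩
    rwa [mem_stepSurv_iff, ← map_symmDiff_singleton, mem_image, mem_image, ← mem_stepSurv_iff]

theorem phase_image_map (e : α ↪ β) (T : Set (Finset α)) (l : List α) :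
    phase (Finset.map e '' T) (l.map e) = Finset.map e '' phase T l := by
  induction l using List.reverseRecOn with
  | nil => rfl
  | append_singleton l x ih =>
    rw [List.map_append, List.map_singleton, phase_append_singleton, phase_append_singleton, ih,
      stepSurv_image_map]

/-- `R σ k` stands for: `k` is the pivot of `σ`. If toggling the pivot is an involution of `T`
fixing the pivot, and toggling a vertex before the pivot leaves `T` or creates an earlier pivot,
then the element matching matches exactly the sets with a pivot, each at its pivot. -/
theorem mem_phase_range_iff {T : Set (Finset ℕ)} {R : Finset ℕ → ℕ → Prop}
    (unique : ∀ {σ j k}, σ ∈ T → R σ j → R σ k → j = k)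
    (toggle : ∀ {σ k}, σ ∈ T → R σ k → σ ∆ {k} ∈ T ∧ R (σ ∆ {k}) k)
    (earlier : ∀ {σ k}, σ ∈ T → σ ∆ {k} ∈ T → (∀ j ≤ k, ¬ R σ j) → ∃ j < k, R (σ ∆ {k}) j)
    {n : ℕ} {σ : Finset ℕ} :
    σ ∈ phase T (List.range n) ↔ σ ∈ T ∧ ∀ k < n, ¬ R σ k := by
  induction n generalizing σ with
  | zero => simp [phase]
  | succ n ih =>
    rw [List.range_succ, phase_append_singleton, mem_stepSurv_iff, ih, ih, and_assoc]
    refine and_congr_right fun hσ => ⟨fun ⟨hlt, htoggle⟩ k hk => ?_, fun hle => ?_⟩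
    · rcases Nat.lt_succ_iff_lt_or_eq.1 hk with hk | rfl
      · exact hlt k hk
      · intro hR
        obtain ⟨hmem, hR'⟩ := toggle hσ hR
        exact htoggle ⟨hmem, fun j hj hRj => hj.ne (unique hmem hRj hR')⟩
    · refine ⟨fun k hk => hle k (hk.trans n.lt_succ_self), fun ⟨hmem, hnot⟩ => ?_⟩
      obtain ⟨j, hj, hR⟩ := earlier hσ hmem fun j hj => hle j (Nat.lt_succ_of_le hj)
      exact hnot j hj hR

end Phase

section IndependentSets

variable {V : Type*} [DecidableEq V] {G : SimpleGraph V}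

theorem isIndepSet_symmDiff_singleton_iff {σ : Finset V} (hσ : G.IsIndepSet σ) (v : V) :
    G.IsIndepSet (σ ∆ {v} : Finset V) ↔ ¬ ∃ w ∈ σ, G.Adj v w := by
  by_cases hv : v ∈ σ
  · rw [symmDiff_singleton_of_mem hv]
    refine iff_of_true (hσ.mono (Finset.erase_subset v σ)) ?_
    rintro ⟨w, hw, hadj⟩
    exact hσ hv hw hadj.ne hadj
  · rw [symmDiff_singleton_of_notMem hv, Finset.coe_insert, SimpleGraph.IsIndepSet,
      Set.pairwise_insert]
    push Not
    exact ⟨fun h w hw hadj => (h.2 w hw hadj.ne).1 hadj,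
      fun h => ⟨hσ, fun w hw _ => ⟨h w hw, fun hadj => h w hw hadj.symm⟩⟩⟩

theorem exists_adj_symmDiff_singleton_iff {σ : Finset V} {u v : V} (h : ¬ G.Adj u v) :
    (∃ w ∈ σ ∆ {v}, G.Adj u w) ↔ ∃ w ∈ σ, G.Adj u w := by
  refine exists_congr fun w => and_congr_left fun hadj => mem_symmDiff_singleton_of_ne ?_
  rintro rfl
  exact h hadj

theorem mem_phase_isIndepSet_iff {l : List V} (hl : ∀ u ∈ l, ∀ v ∈ l, ¬ G.Adj u v)
    {σ : Finset V} :
    σ ∈ phase {τ : Finset V | G.IsIndepSet τ} l ↔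
      G.IsIndepSet σ ∧ ∀ v ∈ l, ∃ w ∈ σ, G.Adj v w := by
  induction l using List.reverseRecOn generalizing σ with
  | nil => simp [phase]
  | append_singleton l v ih =>
    have hl' : ∀ u ∈ l, ∀ v ∈ l, ¬ G.Adj u v := fun u hu v hv =>
      hl u (List.mem_append_left _ hu) v (List.mem_append_left _ hv)
    have nbr_toggle : (∀ u ∈ l, ∃ w ∈ σ ∆ {v}, G.Adj u w) ↔ ∀ u ∈ l, ∃ w ∈ σ, G.Adj u w :=
      forall₂_congr fun u hu => exists_adj_symmDiff_singleton_iff (hl u (by simp [hu]) v (by simp))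
    rw [phase_append_singleton, mem_stepSurv_iff, ih hl', ih hl', nbr_toggle,
      List.forall_mem_append, List.forall_mem_singleton, and_assoc]
    refine and_congr_right fun hσ => ?_
    rw [isIndepSet_symmDiff_singleton_iff hσ v]
    exact ⟨fun ⟨h, hv⟩ => ⟨h, not_not.1 fun hn => hv ⟨hn, h⟩⟩,
      fun ⟨h, hv⟩ => ⟨h, fun hn => hn.1 hv⟩⟩

end IndependentSets

section Ladder

/-- The increasing enumeration `0, c, d + 1, c + (d + 1), …` of the naturals congruent to `0` or
`c` modulo `d + 1` (for `1 ≤ c ≤ d`); its values are called rungs. -/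
def ladder (d c : ℕ) : ℕ → ℕ
  | 0 => 0
  | 1 => c
  | r + 2 => ladder d c r + (d + 1)

theorem ladder_two_mul (d c r : ℕ) : ladder d c (2 * r) = r * (d + 1) := by
  induction r with
  | zero => simp [ladder]
  | succ r ih => rw [Nat.mul_succ, ladder, ih, Nat.succ_mul]

theorem ladder_two_mul_add_one (d c r : ℕ) : ladder d c (2 * r + 1) = c + r * (d + 1) := by
  induction r with
  | zero => simp [ladder]
  | succ r ih => rw [Nat.mul_succ, add_right_comm, ladder, ih, Nat.succ_mul, add_assoc]

variable {d c : ℕ}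

theorem ladder_lt_succ (hc : 1 ≤ c) (hcd : c ≤ d) : ∀ r, ladder d c r < ladder d c (r + 1)
  | 0 => hc
  | 1 => by simp only [ladder]; omega
  | r + 2 => Nat.add_lt_add_right (ladder_lt_succ hc hcd r) (d + 1)

theorem ladder_strictMono (hc : 1 ≤ c) (hcd : c ≤ d) : StrictMono (ladder d c) :=
  strictMono_nat_of_lt_succ (ladder_lt_succ hc hcd)

theorem ladder_succ_le (hc : 1 ≤ c) (hcd : c ≤ d) : ∀ r, ladder d c (r + 1) ≤ ladder d c r + d
  | 0 => by simpa only [ladder, zero_add] using hcd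
  | 1 => by simp only [ladder]; omega
  | r + 2 => by
    have := ladder_succ_le hc hcd r
    simp only [ladder] at this ⊢
    omega

end Ladder

section Pivot

/-- Rung `r` of the ladder `κ` is the pivot of `X` if it is the last rung below the least element
of `X` off the ladder. -/
def IsPivot (κ : ℕ → ℕ) (X : Finset ℕ) (r : ℕ) : Prop :=
  (∀ x ∈ X, x < κ r → x ∈ Set.range κ) ∧ ∃ y ∈ X, κ r < y ∧ y < κ (r + 1)

variable {κ : ℕ → ℕ} {X : Finset ℕ} {r s : ℕ}

theorem notMem_range_of_lt_of_lt (hκ : StrictMono κ) {y : ℕ} (h : κ r < y) (h' : y < κ (r + 1)) :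
    y ∉ Set.range κ := by
  rintro ⟨i, rfl⟩
  have := hκ.lt_iff_lt.1 h
  have := hκ.lt_iff_lt.1 h'
  omega

theorem IsPivot.le (hκ : StrictMono κ) (hr : IsPivot κ X r) (hs : IsPivot κ X s) : r ≤ s := by
  obtain ⟨y, hyX, hy, hy'⟩ := hs.2
  by_contra! hsr
  exact notMem_range_of_lt_of_lt hκ hy hy' (hr.1 y hyX (hy'.trans_le (hκ.monotone hsr)))

theorem IsPivot.eq (hκ : StrictMono κ) (hr : IsPivot κ X r) (hs : IsPivot κ X s) : r = s :=
  (hr.le hκ hs).antisymm (hs.le hκ hr)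

theorem IsPivot.toggle (h : IsPivot κ X r) : IsPivot κ (X ∆ {κ r}) r := by
  obtain ⟨hbelow, y, hyX, hy, hy'⟩ := h
  exact ⟨fun x hx hxr => hbelow x ((mem_symmDiff_singleton_of_ne hxr.ne).1 hx) hxr,
    y, (mem_symmDiff_singleton_of_ne hy.ne').2 hyX, hy, hy'⟩

theorem IsPivot.lt_sup (h : IsPivot κ X r) : κ r < X.sup id := by
  obtain ⟨-, y, hyX, hy, -⟩ := h
  exact hy.trans_le (Finset.le_sup (f := id) hyX)

theorem exists_isPivot_lt (hκ : StrictMono κ) (h0 : κ 0 = 0) {x : ℕ} (hxX : x ∈ X)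
    (hx : x ∉ Set.range κ) : ∃ r, κ r < x ∧ IsPivot κ X r := by
  induction x using Nat.strong_induction_on with
  | _ x ih =>
    by_cases hbelow : ∀ y ∈ X, y < x → y ∈ Set.range κ
    · have hpos : κ 0 < x := by
        rw [h0]
        exact Nat.pos_of_ne_zero fun h => hx ⟨0, h0.trans h.symm⟩
      obtain ⟨r, hlt, hle⟩ := hκ.exists_between_of_tendsto_atTop hκ.tendsto_atTop hpos
      exact ⟨r, hlt, fun y hy hyr => hbelow y hy (hyr.trans hlt), x, hxX, hlt,
        hle.lt_of_ne fun h => hx ⟨r + 1, h.symm⟩⟩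
    · push Not at hbelow
      obtain ⟨y, hyX, hyx, hy⟩ := hbelow
      obtain ⟨r, hr, hpivot⟩ := ih y hyx hyX hy
      exact ⟨r, hr.trans hyx, hpivot⟩

theorem forall_not_isPivot_iff (hκ : StrictMono κ) (h0 : κ 0 = 0) :
    (∀ r, ¬ IsPivot κ X r) ↔ ∀ x ∈ X, x ∈ Set.range κ := by
  constructor
  · intro h x hxX
    by_contra hx
    obtain ⟨r, -, hr⟩ := exists_isPivot_lt hκ h0 hxX hx
    exact h r hr
  · rintro h r ⟨-, y, hyX, hy, hy'⟩
    exact notMem_range_of_lt_of_lt hκ hy hy' (h y hyX)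

end Pivot

section Transversals

theorem sup_id_mem {X : Finset ℕ} (hX : X.Nonempty) : X.sup id ∈ X := by
  obtain ⟨x, hx, h⟩ := Finset.exists_mem_eq_sup X hX id
  rwa [h]

theorem sup_id_symmDiff_singleton {X : Finset ℕ} {k : ℕ} (hk : k < X.sup id) :
    (X ∆ {k}).sup id = X.sup id := by
  have hX : X.Nonempty := Finset.nonempty_iff_ne_empty.2 (by rintro rfl; simp at hk)
  apply le_antisymm
  · refine Finset.sup_le fun x hx => ?_
    rcases eq_or_ne x k with rfl | hxk
    · exact hk.le
    · exact Finset.le_sup (f := id) ((mem_symmDiff_singleton_of_ne hxk).1 hx)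
  · exact Finset.le_sup (f := id) ((mem_symmDiff_singleton_of_ne hk.ne').2 (sup_id_mem hX))

/-- The subsets of `{0, …, m - 1}` meeting every cyclic window `{i, …, i + d - 1}`: the index sets
of the simplices surviving phase one. -/
def windowTransversals (m d : ℕ) : Set (Finset ℕ) :=
  {X | X ⊆ range m ∧ ∀ i < m, ∃ j ∈ X, (j + m - i) % m < d}

/-- Rung `1` of the ladder attached to `X`: the residue of `max X - m` modulo `d + 1`, for a
transversal `X`. -/
def offset (m d : ℕ) (X : Finset ℕ) : ℕ := X.sup id + d + 1 - m

/-- The ladder attached to `X`; continued downwards, it passes through `max X - m`, the cyclic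
predecessor of `0`. -/
abbrev ladderOf (m d : ℕ) (X : Finset ℕ) : ℕ → ℕ := ladder d (offset m d X)

theorem add_sub_mod_lt_iff {m i j : ℕ} (hi : i < m) (hj : j < m) (d : ℕ) :
    (j + m - i) % m < d ↔ i ≤ j ∧ j < i + d ∨ j < i ∧ j + m < i + d := by
  rcases le_or_gt i j with h | h
  · rw [show j + m - i = j - i + m by omega, Nat.add_mod_right, Nat.mod_eq_of_lt (by omega)]
    omega
  · rw [Nat.mod_eq_of_lt (by omega)]
    omega

theorem exists_cyclic_lt_iff {X : Finset ℕ} {m d q : ℕ} (hq : IsGreatest (X : Set ℕ) q)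
    (hqm : q < m) :
    (∀ i < m, ∃ j ∈ X, (j + m - i) % m < d) ↔
      (∃ x ∈ X, x < q + d + 1 - m) ∧ ∀ x < q, ∃ y ∈ X, x < y ∧ y ≤ x + d := by
  have lt_iff {i j : ℕ} (hi : i < m) (hj : j ∈ X) :
      (j + m - i) % m < d ↔ i ≤ j ∧ j < i + d ∨ j < i ∧ j + m < i + d :=
    add_sub_mod_lt_iff hi ((hq.2 hj).trans_lt hqm) d
  constructor
  · intro h
    constructor
    · obtain ⟨x, hx, hlt⟩ := h ((q + 1) % m) (Nat.mod_lt _ (by omega))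
      have hxq := hq.2 hx
      rw [lt_iff (Nat.mod_lt _ (by omega)) hx] at hlt
      rcases Nat.lt_or_ge (q + 1) m with hq1 | hq1
      · rw [Nat.mod_eq_of_lt hq1] at hlt
        exact ⟨x, hx, by omega⟩
      · rw [show q + 1 = m by omega, Nat.mod_self] at hlt
        exact ⟨x, hx, by omega⟩
    · intro x hxq
      obtain ⟨y, hy, hlt⟩ := h (x + 1) (by omega)
      rcases (lt_iff (by omega) hy).1 hlt with ⟨hle, hlt⟩ | ⟨-, hlt⟩
      · exact ⟨y, hy, by omega, by omega⟩
      · exact ⟨q, hq.1, hxq, by omega⟩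
  · rintro ⟨⟨x, hx, hxc⟩, hgap⟩ i hi
    have hxq := hq.2 hx
    rcases Nat.lt_or_ge q i with hqi | hiq
    · exact ⟨x, hx, (lt_iff hi hx).2 (by omega)⟩
    · cases i with
      | zero => exact ⟨x, hx, (lt_iff hi hx).2 (by omega)⟩
      | succ i =>
        obtain ⟨y, hy, hlt, hle⟩ := hgap i hiq
        exact ⟨y, hy, (lt_iff hi hy).2 (by omega)⟩

variable {m d : ℕ} {X : Finset ℕ}

theorem mem_windowTransversals_iff (hm : 0 < m) :
    X ∈ windowTransversals m d ↔ X.sup id < m ∧ (∃ x ∈ X, x < offset m d X) ∧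
      ∀ x < X.sup id, ∃ y ∈ X, x < y ∧ y ≤ x + d := by
  rcases X.eq_empty_or_nonempty with rfl | hX
  · simp only [windowTransversals, Set.mem_ofPred_eq, notMem_empty, false_and, exists_false,
      and_false, iff_false, not_and]
    exact fun _ h => h 0 hm
  · have hsub : X ⊆ range m ↔ X.sup id < m := by
      rw [Finset.sup_lt_iff hm]
      simp [Finset.subset_iff]
    have hq : IsGreatest (X : Set ℕ) (X.sup id) :=
      ⟨sup_id_mem hX, fun x hx => Finset.le_sup (f := id) hx⟩
    rw [windowTransversals, Set.mem_ofPred_eq, hsub]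
    exact and_congr_right fun hlt => exists_cyclic_lt_iff hq hlt

theorem ladderOf_strictMono (hm : 0 < m) (hX : X ∈ windowTransversals m d) :
    StrictMono (ladderOf m d X) := by
  obtain ⟨hlt, ⟨x, -, hx⟩, -⟩ := (mem_windowTransversals_iff hm).1 hX
  exact ladder_strictMono (Nat.one_le_of_lt hx) (by unfold offset; omega)

theorem ladderOf_symmDiff_singleton {k : ℕ} (hk : k < X.sup id) :
    ladderOf m d (X ∆ {k}) = ladderOf m d X := by
  rw [ladderOf, offset, sup_id_symmDiff_singleton hk]
  rfl

/-- The open interval between the two neighbours of rung `r` is a window of length `d`, so it meets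
`X`. -/
theorem ladderOf_mem_of_forall_lt (hm : 0 < m) (hX : X ∈ windowTransversals m d) {r : ℕ}
    (hr : ladderOf m d X r ≤ X.sup id)
    (hbelow : ∀ x ∈ X, x < ladderOf m d X (r + 1) → x ∈ Set.range (ladderOf m d X)) :
    ladderOf m d X r ∈ X := by
  have hmono := ladderOf_strictMono hm hX
  obtain ⟨-, hfirst, hgap⟩ := (mem_windowTransversals_iff hm).1 hX
  obtain ⟨x, hxX, hx, hprev⟩ :
      ∃ x ∈ X, x < ladderOf m d X (r + 1) ∧ ∀ j < r, ladderOf m d X j < x := by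
    cases r with
    | zero =>
      obtain ⟨x, hxX, hx⟩ := hfirst
      exact ⟨x, hxX, hx, by simp⟩
    | succ r =>
      obtain ⟨x, hxX, hrx, hxr⟩ := hgap _ ((hmono r.lt_succ_self).trans_le hr)
      exact ⟨x, hxX, Nat.lt_succ_of_le hxr,
        fun j hj => (hmono.monotone (Nat.le_of_lt_succ hj)).trans_lt hrx⟩
  obtain ⟨i, rfl⟩ := hbelow x hxX hx
  have hir : i < r + 1 := hmono.lt_iff_lt.1 hx
  have hri : ¬ i < r := fun h => (hprev i h).false
  rwa [show r = i by omega]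

theorem symmDiff_pivot_mem_windowTransversals (hm : 0 < m) (hX : X ∈ windowTransversals m d)
    {r : ℕ} (hr : IsPivot (ladderOf m d X) X r) :
    X ∆ {ladderOf m d X r} ∈ windowTransversals m d := by
  have hmono := ladderOf_strictMono hm hX
  have hsup := hr.lt_sup
  obtain ⟨hlt, ⟨x₀, hx₀X, hx₀⟩, hgap⟩ := (mem_windowTransversals_iff hm).1 hX
  obtain ⟨hbelow, y, hyX, hry, hyr⟩ := hr
  have mem_toggle {x : ℕ} (hx : x ∈ X) (hxr : x ≠ ladderOf m d X r) :
      x ∈ X ∆ {ladderOf m d X r} := (mem_symmDiff_singleton_of_ne hxr).2 hx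
  have hy := mem_toggle hyX hry.ne'
  rw [mem_windowTransversals_iff hm, offset, sup_id_symmDiff_singleton hsup]
  refine ⟨hlt, ?_, fun x hxq => ?_⟩
  · cases r with
    | zero => exact ⟨y, hy, hyr⟩
    | succ r =>
      have hle : ladderOf m d X 1 ≤ ladderOf m d X (r + 1) := hmono.monotone (by omega)
      exact ⟨x₀, mem_toggle hx₀X (hx₀.trans_le hle).ne, hx₀⟩
  · obtain ⟨z, hzX, hxz, hzx⟩ := hgap x hxq
    rcases ne_or_eq z (ladderOf m d X r) with hz | rfl
    · exact ⟨z, mem_toggle hzX hz, hxz, hzx⟩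
    rcases le_or_gt y (x + d) with hyx | hyx
    · exact ⟨y, hy, hxz.trans hry, hyx⟩
    -- Removing rung `r` opens a long gap after `x`, so `x` lies below rung `r - 1`.
    cases r with
    | zero => exact absurd hxz (Nat.not_lt_zero x)
    | succ r =>
      have hprev : ladderOf m d X r < ladderOf m d X (r + 1) := hmono r.lt_succ_self
      have hxr : x < ladderOf m d X r := by
        have hnext : ladderOf m d X (r + 1 + 1) = ladderOf m d X r + (d + 1) := rfl
        omega
      have hmem := ladderOf_mem_of_forall_lt hm hX (hprev.trans hsup).le hbelow
      exact ⟨_, mem_toggle hmem hprev.ne, hxr, hprev.le.trans hzx⟩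

/-- `k` is the position of the pivot of `X` on its own ladder; phase two matches `X` with
`X ∆ {k}`. -/
def IsPivotIndex (m d : ℕ) (X : Finset ℕ) (k : ℕ) : Prop :=
  ∃ r, ladderOf m d X r = k ∧ IsPivot (ladderOf m d X) X r

theorem IsPivotIndex.lt_sup {k : ℕ} (h : IsPivotIndex m d X k) : k < X.sup id := by
  obtain ⟨r, rfl, hr⟩ := h
  exact hr.lt_sup

theorem IsPivotIndex.toggle (hm : 0 < m) {k : ℕ} (hX : X ∈ windowTransversals m d)
    (h : IsPivotIndex m d X k) :
    X ∆ {k} ∈ windowTransversals m d ∧ IsPivotIndex m d (X ∆ {k}) k := by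
  obtain ⟨r, rfl, hr⟩ := h
  refine ⟨symmDiff_pivot_mem_windowTransversals hm hX hr, r, ?_⟩
  rw [ladderOf_symmDiff_singleton hr.lt_sup]
  exact ⟨rfl, hr.toggle⟩

theorem forall_not_isPivotIndex_iff (hm : 0 < m) (hX : X ∈ windowTransversals m d) :
    (∀ k, ¬ IsPivotIndex m d X k) ↔ ∀ x ∈ X, x ∈ Set.range (ladderOf m d X) := by
  rw [← forall_not_isPivot_iff (ladderOf_strictMono hm hX) rfl]
  exact ⟨fun h r hr => h _ ⟨r, rfl, hr⟩, fun h k ⟨r, _, hr⟩ => h r hr⟩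

theorem IsPivotIndex.eq (hm : 0 < m) {j k : ℕ} (hX : X ∈ windowTransversals m d)
    (hj : IsPivotIndex m d X j) (hk : IsPivotIndex m d X k) : j = k := by
  obtain ⟨r, rfl, hr⟩ := hj
  obtain ⟨s, rfl, hs⟩ := hk
  rw [hr.eq (ladderOf_strictMono hm hX) hs]

theorem exists_isPivotIndex_lt (hm : 0 < m) (hX : X ∈ windowTransversals m d) {x : ℕ}
    (hxX : x ∈ X) (hx : x ∉ Set.range (ladderOf m d X)) : ∃ k < x, IsPivotIndex m d X k := by
  obtain ⟨r, hrx, hr⟩ := exists_isPivot_lt (ladderOf_strictMono hm hX) rfl hxX hx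
  exact ⟨_, hrx, r, rfl, hr⟩

theorem exists_isPivotIndex_symmDiff_of_lt_sup (hm : 0 < m) {k : ℕ}
    (hX : X ∈ windowTransversals m d) (hY : X ∆ {k} ∈ windowTransversals m d)
    (hk : k < X.sup id) (hpivot : ∀ j ≤ k, ¬ IsPivotIndex m d X j) :
    ∃ j < k, IsPivotIndex m d (X ∆ {k}) j := by
  have hladder : ladderOf m d (X ∆ {k}) = ladderOf m d X := ladderOf_symmDiff_singleton hk
  have hbelow : ∀ x ∈ X, x ≤ k → x ∈ Set.range (ladderOf m d X) := by
    intro x hxX hxk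
    by_contra hx
    obtain ⟨j, hjx, hj⟩ := exists_isPivotIndex_lt hm hX hxX hx
    exact hpivot j (hjx.le.trans hxk) hj
  by_cases hkr : k ∈ Set.range (ladderOf m d X)
  · -- Both `X` and `X ∆ {k}` would be forced to contain the rung `k`.
    obtain ⟨r, rfl⟩ := hkr
    have hupto : ∀ x ∈ X, x < ladderOf m d X (r + 1) → x ∈ Set.range (ladderOf m d X) := by
      intro x hxX hxr
      rcases le_or_gt x (ladderOf m d X r) with h | h
      · exact hbelow x hxX h
      · exact absurd ⟨r, rfl, fun y hyX hy => hbelow y hyX hy.le, x, hxX, h, hxr⟩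
          (hpivot _ le_rfl)
    have hmem := ladderOf_mem_of_forall_lt hm hX hk.le hupto
    have hmem' := ladderOf_mem_of_forall_lt (r := r) hm hY
      (by rw [hladder, sup_id_symmDiff_singleton hk]; exact hk.le) <| by
        rw [hladder]
        intro x hx hxr
        rcases eq_or_ne x (ladderOf m d X r) with rfl | hne
        · exact ⟨r, rfl⟩
        · exact hupto x ((mem_symmDiff_singleton_of_ne hne).1 hx) hxr
    rw [hladder, mem_symmDiff_singleton_self] at hmem'
    exact absurd hmem hmem'
  · have hkX : k ∉ X := fun h => hkr (hbelow k h le_rfl)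
    exact exists_isPivotIndex_lt hm hY (mem_symmDiff_singleton_self.2 hkX) (by rwa [hladder])

end Transversals

section CriticalSet

/-- The 0-based index set of the critical cell for `m = t (d + 1) + a`: the first `2 t + 1` rungs of
the ladder through `0` and `d - a + 1`. -/
def criticalIndices (d t a : ℕ) : Finset ℕ :=
  (range (2 * t + 1)).image (ladder d (d - a + 1))

variable {m d t a : ℕ} {X : Finset ℕ}

theorem ladder_strictMono_of_residue (ha1 : 1 ≤ a) (ha2 : a ≤ d) :
    StrictMono (ladder d (d - a + 1)) :=
  ladder_strictMono (by omega) (by omega)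

theorem card_criticalIndices (ha1 : 1 ≤ a) (ha2 : a ≤ d) :
    (criticalIndices d t a).card = 2 * t + 1 := by
  rw [criticalIndices, card_image_of_injective _ (ladder_strictMono_of_residue ha1 ha2).injective,
    card_range]

theorem mem_criticalIndices {n : ℕ} :
    n ∈ criticalIndices d t a ↔ (∃ r, r ≤ t ∧ n = r * (d + 1)) ∨
      ∃ r, r < t ∧ n = (d - a + 1) + r * (d + 1) := by
  simp only [criticalIndices, Finset.mem_image, Finset.mem_range]
  constructor
  · rintro ⟨i, hi, rfl⟩
    rcases Nat.even_or_odd' i with ⟨r, rfl | rfl⟩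
    · exact Or.inl ⟨r, by omega, ladder_two_mul d _ r⟩
    · exact Or.inr ⟨r, by omega, ladder_two_mul_add_one d _ r⟩
  · rintro (⟨r, hr, rfl⟩ | ⟨r, hr, rfl⟩)
    · exact ⟨2 * r, by omega, ladder_two_mul d _ r⟩
    · exact ⟨2 * r + 1, by omega, ladder_two_mul_add_one d _ r⟩

theorem sup_criticalIndices (ha1 : 1 ≤ a) (ha2 : a ≤ d) :
    (criticalIndices d t a).sup id = t * (d + 1) := by
  rw [← ladder_two_mul d (d - a + 1), criticalIndices]
  refine le_antisymm (Finset.sup_le fun x hx => ?_) (Finset.le_sup (f := id) ?_)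
  · obtain ⟨i, hi, rfl⟩ := Finset.mem_image.1 hx
    exact (ladder_strictMono_of_residue ha1 ha2).monotone (Nat.le_of_lt_succ (mem_range.1 hi))
  · exact mem_image_of_mem _ (by simp)

theorem offset_of_sup_eq (ha2 : a ≤ d) (hm : m = t * (d + 1) + a) (h : X.sup id = t * (d + 1)) :
    offset m d X = d - a + 1 := by
  rw [offset, h]
  omega

theorem criticalIndices_mem_windowTransversals (ha1 : 1 ≤ a) (ha2 : a ≤ d)
    (hm : m = t * (d + 1) + a) : criticalIndices d t a ∈ windowTransversals m d := by
  have hsup := sup_criticalIndices (t := t) ha1 ha2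
  have mem_of_le {i : ℕ} (hi : i ≤ 2 * t) : ladder d (d - a + 1) i ∈ criticalIndices d t a :=
    mem_image_of_mem _ (by simpa using Nat.lt_succ_of_le hi)
  rw [mem_windowTransversals_iff (by omega), offset_of_sup_eq ha2 hm hsup, hsup]
  refine ⟨by omega, ⟨0, mem_of_le (i := 0) (by omega), by omega⟩, fun x hx => ?_⟩
  have hmono := ladder_strictMono_of_residue ha1 ha2
  obtain ⟨i, hix, hxi⟩ := hmono.exists_between_of_tendsto_atTop hmono.tendsto_atTop x.succ_pos
  have hi : i < 2 * t := hmono.lt_iff_lt.1 <| by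
    rw [ladder_two_mul]
    exact (Nat.le_of_lt_succ hix).trans_lt hx
  have hgap : ladder d (d - a + 1) (i + 1) ≤ ladder d (d - a + 1) i + d :=
    ladder_succ_le (by omega) (by omega) i
  exact ⟨_, mem_of_le hi, hxi, hgap.trans (by omega)⟩

theorem sup_eq_of_mem_range (ha1 : 1 ≤ a) (ha2 : a ≤ d) (hm : m = t * (d + 1) + a)
    (hlt : X.sup id < m) (hle : m ≤ X.sup id + d)
    (hsup : X.sup id ∈ Set.range (ladderOf m d X)) : X.sup id = t * (d + 1) := by
  obtain ⟨i, hi⟩ := hsup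
  rcases Nat.even_or_odd' i with ⟨r, rfl | rfl⟩
  · rw [ladderOf, ladder_two_mul] at hi
    have htr : t < r + 1 := Nat.lt_of_mul_lt_mul_right (a := d + 1) (by rw [Nat.succ_mul]; omega)
    have hrt : r < t + 1 := Nat.lt_of_mul_lt_mul_right (a := d + 1) (by rw [Nat.succ_mul]; omega)
    rw [← hi, show r = t by omega]
  · -- An odd top rung would make `m` a multiple of `d + 1`.
    rw [ladderOf, ladder_two_mul_add_one, offset] at hi
    have hdvd : d + 1 ∣ t * (d + 1) + a := by
      refine ⟨r + 1, ?_⟩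
      rw [Nat.mul_comm (d + 1), Nat.succ_mul]
      omega
    have := Nat.le_of_dvd ha1 ((Nat.dvd_add_right (Nat.dvd_mul_left _ t)).1 hdvd)
    omega

theorem forall_mem_range_ladderOf_iff (ha1 : 1 ≤ a) (ha2 : a ≤ d) (hm : m = t * (d + 1) + a)
    (hX : X ∈ windowTransversals m d) :
    (∀ x ∈ X, x ∈ Set.range (ladderOf m d X)) ↔ X = criticalIndices d t a := by
  have hm0 : 0 < m := by omega
  constructor
  · intro h
    obtain ⟨hlt, ⟨x, hxX, hx⟩, -⟩ := (mem_windowTransversals_iff hm0).1 hX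
    have hsup : X.sup id = t * (d + 1) :=
      sup_eq_of_mem_range ha1 ha2 hm hlt (by unfold offset at hx; omega)
        (h _ (sup_id_mem ⟨x, hxX⟩))
    have hladder : ladderOf m d X = ladder d (d - a + 1) := by
      rw [ladderOf, offset_of_sup_eq ha2 hm hsup]
    have hmono := ladder_strictMono_of_residue ha1 ha2
    rw [← ladder_two_mul d (d - a + 1)] at hsup
    ext y
    rw [criticalIndices, Finset.mem_image]
    constructor
    · intro hy
      obtain ⟨i, rfl⟩ := h y hy
      rw [hladder] at hy ⊢
      have hi : i ≤ 2 * t := hmono.le_iff_le.1 (hsup ▸ Finset.le_sup (f := id) hy)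
      exact ⟨i, by simpa using Nat.lt_succ_of_le hi, rfl⟩
    · rintro ⟨i, hi, rfl⟩
      rw [← hladder] at hsup hmono ⊢
      refine ladderOf_mem_of_forall_lt hm0 hX ?_ fun x hxX _ => h x hxX
      exact hsup ▸ hmono.monotone (Nat.le_of_lt_succ (mem_range.1 hi))
  · rintro rfl x hx
    rw [ladderOf, offset_of_sup_eq ha2 hm (sup_criticalIndices ha1 ha2)]
    obtain ⟨i, -, rfl⟩ := Finset.mem_image.1 hx
    exact ⟨i, rfl⟩

theorem exists_isPivotIndex_symmDiff (ha1 : 1 ≤ a) (ha2 : a ≤ d) (hm : m = t * (d + 1) + a)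
    {k : ℕ} (hX : X ∈ windowTransversals m d) (hY : X ∆ {k} ∈ windowTransversals m d)
    (hpivot : ∀ j ≤ k, ¬ IsPivotIndex m d X j) : ∃ j < k, IsPivotIndex m d (X ∆ {k}) j := by
  have hm0 : 0 < m := by omega
  rcases Nat.lt_or_ge k (X.sup id) with hk | hk
  · exact exists_isPivotIndex_symmDiff_of_lt_sup hm0 hX hY hk hpivot
  have eq_critical {Z : Finset ℕ} (hZ : Z ∈ windowTransversals m d)
      (h : ∀ j, ¬ IsPivotIndex m d Z j) : Z = criticalIndices d t a :=
    (forall_mem_range_ladderOf_iff ha1 ha2 hm hZ).1 ((forall_not_isPivotIndex_iff hm0 hZ).1 h)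
  have hXcrit : X = criticalIndices d t a :=
    eq_critical hX fun j hj => hpivot j (hj.lt_sup.le.trans hk) hj
  obtain ⟨j, hj⟩ : ∃ j, IsPivotIndex m d (X ∆ {k}) j := by
    by_contra! h
    exact symmDiff_singleton_ne X k ((eq_critical hY h).trans hXcrit.symm)
  have hsup : (X ∆ {k}).sup id ≤ k := Finset.sup_le fun x hx => by
    rcases eq_or_ne x k with rfl | hxk
    · exact le_rfl
    · exact (Finset.le_sup (f := id) ((mem_symmDiff_singleton_of_ne hxk).1 hx)).trans hk
  exact ⟨j, hj.lt_sup.trans_le hsup, hj⟩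

theorem phase_windowTransversals_eq_singleton (ha1 : 1 ≤ a) (ha2 : a ≤ d)
    (hm : m = t * (d + 1) + a) :
    phase (windowTransversals m d) (List.range m) = {criticalIndices d t a} := by
  have hm0 : 0 < m := by omega
  have hcrit := criticalIndices_mem_windowTransversals ha1 ha2 hm
  ext X
  rw [mem_phase_range_iff (R := IsPivotIndex m d) (IsPivotIndex.eq hm0)
    (IsPivotIndex.toggle hm0) (exists_isPivotIndex_symmDiff ha1 ha2 hm), Set.mem_singleton_iff]
  constructor
  · rintro ⟨hX, hpivot⟩
    rw [← forall_mem_range_ladderOf_iff ha1 ha2 hm hX, ← forall_not_isPivotIndex_iff hm0 hX]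
    have hlt := ((mem_windowTransversals_iff hm0).1 hX).1
    exact fun k hk => hpivot k (hk.lt_sup.trans hlt) hk
  · rintro rfl
    exact ⟨hcrit, fun k _ => (forall_not_isPivotIndex_iff hm0 hcrit).2
      ((forall_mem_range_ladderOf_iff ha1 ha2 hm hcrit).2 rfl) k⟩

end CriticalSet

section Cells

variable {m d t a : ℕ}

theorem faceP_eq_setOf_isIndepSet (m d : ℕ) :
    faceP m d = {σ : Finset (Fin m ⊕ Fin m) | (Gmd m d).IsIndepSet σ} :=
  Set.ext fun _ => ⟨fun h _ hu _ hv _ => h _ hu _ hv,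
    fun h _ hu _ hv hadj => h hu hv hadj.ne hadj⟩

theorem gmd_adj_inl_inr {i j : Fin m} :
    (Gmd m d).Adj (Sum.inl i) (Sum.inr j) ↔ (j.val + m - i.val) % m < d := by
  simp [Gmd]

theorem not_gmd_adj_inl_inl (i j : Fin m) : ¬ (Gmd m d).Adj (Sum.inl i) (Sum.inl j) := by
  simp [Gmd]

theorem not_gmd_adj_inr_inr (i j : Fin m) : ¬ (Gmd m d).Adj (Sum.inr i) (Sum.inr j) := by
  simp [Gmd]

theorem onlyB_iff_toLeft_eq_empty {σ : Finset (Fin m ⊕ Fin m)} : onlyB m σ ↔ σ.toLeft = ∅ := by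
  simp [onlyB, Finset.eq_empty_iff_forall_notMem]

theorem eq_map_inr_iff {σ : Finset (Fin m ⊕ Fin m)} {X : Finset (Fin m)} :
    σ = X.map Function.Embedding.inr ↔ onlyB m σ ∧ ∀ j, Sum.inr j ∈ σ ↔ j ∈ X := by
  rw [onlyB_iff_toLeft_eq_empty, ← Finset.empty_disjSum, eq_comm, Finset.disjSum_eq_iff]
  simp [Finset.ext_iff, eq_comm, iff_comm]

/-- The window transversals as sets of vertices `b_j`, before passing from `Fin m` to `ℕ`. -/
def finWindowTransversals (m d : ℕ) : Set (Finset (Fin m)) :=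
  {X | ∀ i : Fin m, ∃ j ∈ X, (j.val + m - i.val) % m < d}

theorem setM_eq_image_map_inr (m d : ℕ) :
    setM m d = Finset.map Function.Embedding.inr '' finWindowTransversals m d := by
  have hA : ∀ u ∈ listA m, ∀ v ∈ listA m, ¬ (Gmd m d).Adj u v := by
    simp [listA, not_gmd_adj_inl_inl]
  ext σ
  rw [setM, faceP_eq_setOf_isIndepSet, mem_phase_isIndepSet_iff hA]
  constructor
  · rintro ⟨hσ, hnbr⟩
    have hB : onlyB m σ := by
      rintro (i | j) hv
      · obtain ⟨w, hw, hadj⟩ := hnbr (Sum.inl i) (by simp [listA])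
        exact absurd hadj (hσ hv hw hadj.ne)
      · exact ⟨j, rfl⟩
    refine ⟨σ.toRight, fun i => ?_, (eq_map_inr_iff.2 ⟨hB, by simp⟩).symm⟩
    obtain ⟨w, hw, hadj⟩ := hnbr (Sum.inl i) (by simp [listA])
    obtain ⟨j, rfl⟩ := hB w hw
    exact ⟨j, Finset.mem_toRight.2 hw, gmd_adj_inl_inr.1 hadj⟩
  · rintro ⟨X, hX, rfl⟩
    constructor
    · intro u hu v hv _
      obtain ⟨i, -, rfl⟩ := Finset.mem_map.1 hu
      obtain ⟨j, -, rfl⟩ := Finset.mem_map.1 hv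
      exact not_gmd_adj_inr_inr i j
    · intro v hv
      obtain ⟨i, -, rfl⟩ := List.mem_map.1 hv
      obtain ⟨j, hj, hlt⟩ := hX i
      exact ⟨Sum.inr j, Finset.mem_map_of_mem _ hj, gmd_adj_inl_inr.2 hlt⟩

theorem setC_eq_phase (m d : ℕ) : setC m d = phase (setM m d) (listB m) := by
  have hA : setM m d = faceP m d \ ⋃ i : Fin m, scriptSa m d i := phase_map_finRange _ _
  have hB : phase (setM m d) (listB m) = setM m d \ ⋃ i : Fin m, scriptSb m d i :=
    phase_map_finRange _ _
  rw [hB, hA, setC, Set.sdiff_sdiff]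

theorem image_map_finWindowTransversals (m d : ℕ) :
    Finset.map Fin.valEmbedding '' finWindowTransversals m d = windowTransversals m d := by
  ext Y
  constructor
  · rintro ⟨X, hX, rfl⟩
    refine ⟨fun j hj => ?_, fun i hi => ?_⟩
    · obtain ⟨j, -, rfl⟩ := Finset.mem_map.1 hj
      exact Finset.mem_range.2 j.isLt
    · obtain ⟨j, hj, hlt⟩ := hX ⟨i, hi⟩
      exact ⟨j, Finset.mem_map_of_mem Fin.valEmbedding hj, hlt⟩
  · rintro ⟨hsub, hY⟩
    have hlt : ∀ j ∈ Y, j < m := fun j hj => Finset.mem_range.1 (hsub hj)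
    refine ⟨Y.attachFin hlt, fun i => ?_, Finset.map_valEmbedding_attachFin hlt⟩
    obtain ⟨j, hj, hji⟩ := hY i i.isLt
    exact ⟨⟨j, hlt j hj⟩, (Finset.mem_attachFin hlt).2 hj, hji⟩

theorem setC_eq_singleton (ha1 : 1 ≤ a) (ha2 : a ≤ d) (hm : m = t * (d + 1) + a)
    (hlt : ∀ n ∈ criticalIndices d t a, n < m) :
    setC m d = {((criticalIndices d t a).attachFin hlt).map Function.Embedding.inr} := by
  have hphase : phase (finWindowTransversals m d) (List.finRange m) =
      {(criticalIndices d t a).attachFin hlt} := by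
    apply (Finset.map_injective Fin.valEmbedding).image_injective
    have hrange : (List.finRange m).map Fin.valEmbedding = List.range m :=
      List.map_coe_finRange_eq_range
    rw [← phase_image_map, image_map_finWindowTransversals, hrange,
      phase_windowTransversals_eq_singleton ha1 ha2 hm, Set.image_singleton,
      Finset.map_valEmbedding_attachFin]
  have hlist : listB m = (List.finRange m).map (Function.Embedding.inr : Fin m ↪ _) := rfl
  rw [setC_eq_phase, setM_eq_image_map_inr, hlist, phase_image_map, hphase, Set.image_singleton]

end Cells

/-- 0-based indices: suppose `m = t(d+1) + a` with `t ≥ 1` and `1 ≤ a ≤ d`.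
Then there is exactly one critical cell, namely (with `j1 = d - a + 1`)
`{b_0, b_{j1}, b_{d+1}, b_{j1+(d+1)}, …, b_{(t-1)(d+1)}, b_{j1+(t-1)(d+1)}, b_{t(d+1)}}`,
which has cardinality `2t + 1`. -/
theorem stmt15 (m d t a : ℕ) (hd : 1 ≤ d) (hdm : d ≤ m)
    (ht : 1 ≤ t) (ha1 : 1 ≤ a) (ha2 : a ≤ d) (hm : m = t * (d + 1) + a) :
    (∀ σ : Finset (Fin m ⊕ Fin m), σ ∈ setC m d ↔
      (onlyB m σ ∧
       ∀ j : Fin m, Sum.inr j ∈ σ ↔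
         ((∃ r, r ≤ t ∧ j.val = r * (d + 1)) ∨
          (∃ r, r < t ∧ j.val = (d - a + 1) + r * (d + 1))))) ∧
    (setC m d).ncard = 1 ∧
    (∀ σ ∈ setC m d, σ.card = 2 * t + 1) := by
  have hlt : ∀ n ∈ criticalIndices d t a, n < m := fun n hn =>
    mem_range.1 ((criticalIndices_mem_windowTransversals ha1 ha2 hm).1 hn)
  have hC := setC_eq_singleton ha1 ha2 hm hlt
  refine ⟨fun σ => ?_, ?_, fun σ hσ => ?_⟩
  · rw [hC, Set.mem_singleton_iff, eq_map_inr_iff]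
    simp only [mem_attachFin, mem_criticalIndices]
  · rw [hC, Set.ncard_singleton]
  · rw [hC, Set.mem_singleton_iff] at hσ
    rw [hσ, card_map, card_attachFin, card_criticalIndices ha1 ha2]
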